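/- arXiv:2106.12092 — 3 statements merged into one kernel-verified Lean document; each statement's English description precedes it below -/
import Mathlib

section
/- Let E be a complex Banach space, p ≥ 0, and f̂ ∈ E[[x₁,…,x_d]] a formal power series. Then f̂(x) is (p,…,p)-Gevrey if and only if f̂(Mx) is (p,…,p)-Gevrey for every invertible matrix M ∈ GL_d(ℂ) (here f̂(Mx) denotes the formal power series obtained by substituting the linear change of variables x ↦ Mx). -/
/-!
STATEMENT 5 (stability of Gevrey classes under linear changes of variables).
Let E be a complex Banach space, p ≥ 0, and f̂ ∈ E[[x₁,…,x_d]] a formal power series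
(represented by its family of coefficients a : ℕ^d → E).  Then f̂ is (p,…,p)-Gevrey
if and only if f̂(Mx) is (p,…,p)-Gevrey for every M ∈ GL_d(ℂ).
-/

noncomputable section

open Finset

/-- `f̂ = Σ_β a_β x^β` is `(p,…,p)`-Gevrey: `‖a_β‖ ≤ C A^{|β|} (β₁!⋯β_d!)^p`. -/
def IsGevreyP {E : Type*} [NormedAddCommGroup E] (d : ℕ) (p : ℝ)
    (a : (Fin d → ℕ) → E) : Prop :=
  ∃ C A : ℝ, 0 < C ∧ 0 < A ∧ ∀ β : Fin d → ℕ,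
    ‖a β‖ ≤ C * A ^ (∑ i, β i) * ∏ i, ((β i).factorial : ℝ) ^ p

/-- The finite set of all multi-indices `β ∈ ℕ^d` with `|β| = n`. -/
def degTuples (d n : ℕ) : Finset (Fin d → ℕ) :=
  (Fintype.piFinset fun _ => Finset.range (n + 1)).filter fun β => ∑ i, β i = n

/-- The coefficients of `f̂(Mx) = Σ_β a_β (Mx)^β`: the coefficient of `x^γ` is
`Σ_{|β|=|γ|} (coefficient of x^γ in ∏_i (Σ_j M_{ij} x_j)^{β_i}) • a_β`. -/
def linChangeCoeff {E : Type*} [NormedAddCommGroup E] [NormedSpace ℂ E] {d : ℕ}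
    (M : Matrix (Fin d) (Fin d) ℂ) (a : (Fin d → ℕ) → E) (γ : Fin d → ℕ) : E :=
  ∑ β ∈ degTuples d (∑ i, γ i),
    (MvPolynomial.coeff (Finsupp.equivFunOnFinite.symm γ)
      (∏ i, (∑ j, MvPolynomial.C (M i j) * MvPolynomial.X j) ^ (β i))) • a β

/-- Coefficientwise majorization. -/
def Major {d : ℕ} (P : MvPolynomial (Fin d) ℂ) (Q : MvPolynomial (Fin d) ℝ) : Prop :=
  ∀ m, ‖MvPolynomial.coeff m P‖ ≤ MvPolynomial.coeff m Q

lemma Major.mul {d : ℕ} {P P' : MvPolynomial (Fin d) ℂ} {Q Q' : MvPolynomial (Fin d) ℝ}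
    (h : Major P Q) (h' : Major P' Q') : Major (P * P') (Q * Q') := by
  intro m
  rw [MvPolynomial.coeff_mul, MvPolynomial.coeff_mul]
  refine (norm_sum_le _ _).trans (Finset.sum_le_sum fun x _ => ?_)
  rw [norm_mul]
  exact mul_le_mul (h _) (h' _) (norm_nonneg _) ((norm_nonneg _).trans (h _))

lemma Major.one {d : ℕ} : Major (1 : MvPolynomial (Fin d) ℂ) 1 := by
  intro m
  rw [MvPolynomial.coeff_one, MvPolynomial.coeff_one]
  split_ifs <;> simp

lemma Major.pow {d : ℕ} {P : MvPolynomial (Fin d) ℂ} {Q : MvPolynomial (Fin d) ℝ}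
    (h : Major P Q) (n : ℕ) : Major (P ^ n) (Q ^ n) := by
  induction n with
  | zero => simpa using Major.one
  | succ n ih => rw [pow_succ, pow_succ]; exact ih.mul h

lemma Major.prod {d : ℕ} {ι : Type*} (s : Finset ι) {P : ι → MvPolynomial (Fin d) ℂ}
    {Q : ι → MvPolynomial (Fin d) ℝ} (h : ∀ i, Major (P i) (Q i)) :
    Major (∏ i ∈ s, P i) (∏ i ∈ s, Q i) := by
  classical
  induction s using Finset.induction_on with
  | empty => simpa using Major.one
  | insert a s ha ih =>
    rw [Finset.prod_insert ha, Finset.prod_insert ha]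
    exact (h a).mul ih

lemma Major.lin {d : ℕ} (c : Fin d → ℂ) :
    Major (∑ j, MvPolynomial.C (c j) * MvPolynomial.X j)
      (∑ j, MvPolynomial.C (‖c j‖) * MvPolynomial.X j) := by
  intro m
  rw [MvPolynomial.coeff_sum, MvPolynomial.coeff_sum]
  refine (norm_sum_le _ _).trans (Finset.sum_le_sum fun j _ => ?_)
  rw [MvPolynomial.coeff_C_mul, MvPolynomial.coeff_C_mul, norm_mul,
    MvPolynomial.coeff_X, MvPolynomial.coeff_X]
  split_ifs <;> simp

lemma Major.le_eval {d : ℕ} {P : MvPolynomial (Fin d) ℂ} {Q : MvPolynomial (Fin d) ℝ}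
    (h : Major P Q) (m : Fin d →₀ ℕ) :
    ‖MvPolynomial.coeff m P‖ ≤ MvPolynomial.eval (fun _ => (1 : ℝ)) Q := by
  refine (h m).trans ?_
  have h0 : ∀ m, 0 ≤ MvPolynomial.coeff m Q := fun m => (norm_nonneg _).trans (h m)
  rw [MvPolynomial.eval_eq]
  simp only [one_pow, Finset.prod_const_one, mul_one]
  by_cases hm : m ∈ Q.support
  · exact Finset.single_le_sum (f := fun m => MvPolynomial.coeff m Q) (fun i _ => h0 i) hm
  · rw [MvPolynomial.notMem_support_iff.mp hm]
    exact Finset.sum_nonneg fun i _ => h0 i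

lemma coeff_bound {d : ℕ} (M : Matrix (Fin d) (Fin d) ℂ) (m : Fin d →₀ ℕ) (β : Fin d → ℕ) :
    ‖MvPolynomial.coeff m
      (∏ i, (∑ j, MvPolynomial.C (M i j) * MvPolynomial.X j) ^ (β i))‖ ≤
      (1 + ∑ i, ∑ j, ‖M i j‖) ^ (∑ i, β i) := by
  refine (Major.le_eval (Major.prod _ fun i => (Major.lin (fun j => M i j)).pow (β i)) m).trans ?_
  rw [map_prod, ← Finset.prod_pow_eq_pow_sum]
  refine Finset.prod_le_prod (fun i _ => ?_) (fun i _ => ?_)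
  · simp only [map_pow, map_sum, map_mul, MvPolynomial.eval_C, MvPolynomial.eval_X, mul_one]
    positivity
  · simp only [map_pow, map_sum, map_mul, MvPolynomial.eval_C, MvPolynomial.eval_X, mul_one]
    refine pow_le_pow_left₀ (by positivity) ?_ _
    have := Finset.single_le_sum (f := fun i => ∑ j, ‖M i j‖) (s := Finset.univ)
      (fun i _ => by positivity) (Finset.mem_univ i)
    linarith

lemma card_degTuples (d n : ℕ) : ((degTuples d n).card : ℝ) ≤ ((2 : ℝ) ^ d) ^ n := by
  have h1 : (degTuples d n).card ≤ (n + 1) ^ d := by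
    refine (Finset.card_filter_le _ _).trans ?_
    simp
  have h2 : (n + 1) ^ d ≤ (2 ^ d) ^ n := by
    rw [← pow_mul, mul_comm d n, pow_mul]
    exact Nat.pow_le_pow_left Nat.lt_two_pow_self _
  exact_mod_cast h1.trans h2

lemma factorial_le {d : ℕ} (γ : Fin d → ℕ) :
    (∑ i, γ i).factorial ≤ (d + 1) ^ (∑ i, γ i) * ∏ i, (γ i).factorial := by
  rw [← Nat.multinomial_spec, mul_comm]
  refine Nat.mul_le_mul_right _ ?_
  have h := Finset.sum_pow_eq_sum_piAntidiag (Finset.univ : Finset (Fin d))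
    (fun _ => (1 : ℕ)) (∑ i, γ i)
  simp only [one_pow, Finset.prod_const_one, mul_one, Finset.sum_const, Finset.card_univ,
    Fintype.card_fin, smul_eq_mul] at h
  have h1 : Nat.multinomial Finset.univ γ ≤ d ^ (∑ i, γ i) := by
    rw [h]
    refine Finset.single_le_sum (f := fun k => Nat.multinomial Finset.univ k)
      (fun _ _ => Nat.zero_le _) ?_
    simp
  exact h1.trans (Nat.pow_le_pow_left (Nat.le_succ d) _)

lemma prod_factorial_rpow_le {d : ℕ} {p : ℝ} (hp : 0 ≤ p) (β γ : Fin d → ℕ)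
    (h : ∑ i, β i = ∑ i, γ i) :
    ∏ i, ((β i).factorial : ℝ) ^ p ≤
      (((d : ℝ) + 1) ^ p) ^ (∑ i, γ i) * ∏ i, ((γ i).factorial : ℝ) ^ p := by
  rw [Real.finsetProd_rpow _ _ (fun i _ => by positivity),
    Real.finsetProd_rpow _ _ (fun i _ => by positivity), ← Real.rpow_natCast,
    ← Real.rpow_mul (by positivity), mul_comm p, Real.rpow_mul (by positivity),
    Real.rpow_natCast, ← Real.mul_rpow (by positivity) (by positivity)]
  refine Real.rpow_le_rpow (by positivity) ?_ hp
  have h1 : ∏ i, (β i).factorial ≤ (∑ i, β i).factorial :=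
    Nat.le_of_dvd (Nat.factorial_pos _) (Nat.prod_factorial_dvd_factorial_sum _ _)
  rw [h] at h1
  exact_mod_cast h1.trans (factorial_le γ)

lemma linChangeCoeff_one {E : Type*} [NormedAddCommGroup E] [NormedSpace ℂ E] {d : ℕ}
    (a : (Fin d → ℕ) → E) : linChangeCoeff (1 : Matrix (Fin d) (Fin d) ℂ) a = a := by
  classical
  funext γ
  unfold linChangeCoeff
  have key : ∀ β : Fin d → ℕ, MvPolynomial.coeff (Finsupp.equivFunOnFinite.symm γ)
      (∏ i, (∑ j, MvPolynomial.C ((1 : Matrix (Fin d) (Fin d) ℂ) i j) *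
        MvPolynomial.X j) ^ (β i)) = if β = γ then 1 else 0 := by
    intro β
    have h1 : ∀ i, (∑ j, MvPolynomial.C ((1 : Matrix (Fin d) (Fin d) ℂ) i j) *
        (MvPolynomial.X j : MvPolynomial (Fin d) ℂ)) = MvPolynomial.X i := by
      intro i
      rw [Finset.sum_eq_single i]
      · simp
      · intro j _ hj
        simp [Matrix.one_apply_ne hj.symm]
      · simp
    simp only [h1]
    have h2 : ∏ i, (MvPolynomial.X i : MvPolynomial (Fin d) ℂ) ^ β i =
        MvPolynomial.monomial (Finsupp.equivFunOnFinite.symm β) 1 := by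
      rw [MvPolynomial.monomial_eq, Finsupp.prod_fintype _ _ (by simp)]
      simp
    rw [h2, MvPolynomial.coeff_monomial]
    simp
  simp only [key, ite_smul, one_smul, zero_smul, Finset.sum_ite_eq']
  rw [if_pos]
  simp only [degTuples, Finset.mem_filter, Fintype.mem_piFinset, Finset.mem_range, and_true]
  intro i
  exact Nat.lt_succ_of_le (Finset.single_le_sum (f := γ) (fun _ _ => Nat.zero_le _)
    (Finset.mem_univ i))

theorem gevrey_linear_change {E : Type*} [NormedAddCommGroup E] [NormedSpace ℂ E]
    [CompleteSpace E] (d : ℕ) (p : ℝ) (hp : 0 ≤ p) (a : (Fin d → ℕ) → E) :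
    IsGevreyP d p a ↔
      ∀ M : Matrix (Fin d) (Fin d) ℂ, IsUnit M → IsGevreyP d p (linChangeCoeff M a) := by
  constructor
  · rintro ⟨C, A, hC, hA, h⟩ M -
    set K : ℝ := 1 + ∑ i, ∑ j, ‖M i j‖ with hK
    have hK0 : 0 < K := by positivity
    refine ⟨C, 2 ^ d * (K * (A * ((d : ℝ) + 1) ^ p)), hC, by positivity, fun γ => ?_⟩
    unfold linChangeCoeff
    refine (norm_sum_le _ _).trans ?_
    set n := ∑ i, γ i with hn
    have hb : ∀ β ∈ degTuples d n, ‖(MvPolynomial.coeff (Finsupp.equivFunOnFinite.symm γ)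
        (∏ i, (∑ j, MvPolynomial.C (M i j) * MvPolynomial.X j) ^ (β i))) • a β‖ ≤
        K ^ n * (C * A ^ n * ((((d : ℝ) + 1) ^ p) ^ n * ∏ i, ((γ i).factorial : ℝ) ^ p)) := by
      intro β hβ
      have hs : ∑ i, β i = n := (Finset.mem_filter.mp hβ).2
      rw [norm_smul]
      have e1 := coeff_bound M (Finsupp.equivFunOnFinite.symm γ) β
      rw [hs] at e1
      have e2 := h β
      rw [hs] at e2
      have e3 := prod_factorial_rpow_le hp β γ hs
      exact mul_le_mul e1 (e2.trans (mul_le_mul_of_nonneg_left e3 (by positivity)))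
        (norm_nonneg _) (by positivity)
    refine (Finset.sum_le_card_nsmul _ _ _ hb).trans ?_
    rw [nsmul_eq_mul]
    refine (mul_le_mul_of_nonneg_right (card_degTuples d n) (by positivity)).trans (le_of_eq ?_)
    simp only [mul_pow]
    ring
  · intro h
    have := h 1 isUnit_one
    rwa [linChangeCoeff_one] at this

end
end

section
/- Let P ∈ ℂ{x₁,…,x_d} with P(0) = 0 and ∂_{x₁}P(0) ≠ 0, and let ξ : (ℂ^d,0) → (ℂ^d,0) be the holomorphic change of variables ξ₁ = P(x), ξ_j = x_j for j = 2,…,d. Then for every α ∈ ℕ^d \ {0} there exist germs B_{j,β}^{α} ∈ ℂ{x} depending only on P (given by polynomials in the partial derivatives of P, independent of f), indexed by 1 ≤ j ≤ |α|−1 and β ∈ ℕ^{d−1} with (0,β) ≤ α and |β| ≤ |α|−j, such that for every function f holomorphic near 0 ∈ ℂ^d, ∂_{α,x}(f ∘ ξ) = (∂_{x₁}P)^{α₁}⋯(∂_{x_d}P)^{α_d} · (∂_{ξ₁}^{|α|} f) ∘ ξ + Σ_{j=1}^{|α|−1} Σ_{(0,β)≤α, |β|≤|α|−j} B_{j,β}^{α}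 · (∂_{ξ₁}^{j} ∂_{β,ξ'} f) ∘ ξ + δ̄_α · (∂_{α,ξ} f) ∘ ξ, where δ̄_α = 1 if α₁ = 0 and δ̄_α = 0 if α₁ ≥ 1. -/
/-!
STATEMENT 11 (Lemma: derivatives after the change of variables ξ₁ = P(x), ξ_j = x_j).
Let P ∈ ℂ{x₁,…,x_d} with P(0) = 0 and ∂_{x₁}P(0) ≠ 0, and let ξ(x) = (P(x), x₂,…,x_d).
For every α ∈ ℕ^d \ {0} there exist germs B_{j,β} ∈ ℂ{x} depending only on P (not on f),
indexed by 1 ≤ j ≤ |α|−1 and β ∈ ℕ^{d−1} with (0,β) ≤ α, |β| ≤ |α|−j, such that for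
every f holomorphic near 0,
∂_{α,x}(f∘ξ) = (∂_{x₁}P)^{α₁}⋯(∂_{x_d}P)^{α_d} (∂_{ξ₁}^{|α|}f)∘ξ
  + Σ_{j=1}^{|α|−1} Σ_{(0,β)≤α, |β|≤|α|−j} B_{j,β} (∂_{ξ₁}^j ∂_{β,ξ'}f)∘ξ
  + δ̄_α (∂_{α,ξ}f)∘ξ,   near 0,
where δ̄_α = 1 if α₁ = 0 and δ̄_α = 0 otherwise.
We work with d+1 ≥ 1 variables indexed by `Fin (d+1)`; a multi-index β ∈ ℕ^{d−1} in the
variables ξ₂,…,ξ_d is encoded as a multi-index γ on all variables with γ₁ = 0, so that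
∂_{ξ₁}^j ∂_{β,ξ'} = ∂_{γ'} with γ' = γ updated to have first entry j.
-/

noncomputable section

open Finset

/-- The partial derivative `∂/∂x_v` of a function of several complex variables. -/
def pdF {n : ℕ} (v : Fin n) (f : (Fin n → ℂ) → ℂ) : (Fin n → ℂ) → ℂ :=
  fun x => fderiv ℂ f x (Pi.single v 1)

/-- The iterated partial derivative `∂_α = ∂₁^{α₁} ∘ ⋯ ∘ ∂_d^{α_d}`. -/
def mderivF {n : ℕ} (α : Fin n → ℕ) : ((Fin n → ℂ) → ℂ) → ((Fin n → ℂ) → ℂ) :=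
  fun f => (List.ofFn fun i : Fin n => (pdF i)^[α i]).foldr (· ∘ ·) id f

namespace CoV

variable {n : ℕ}

lemma pdF_congr {a : Fin n → ℂ} (i : Fin n) {f g : (Fin n → ℂ) → ℂ}
    (h : f =ᶠ[nhds a] g) : pdF i f =ᶠ[nhds a] pdF i g := by
  filter_upwards [h.fderiv (𝕜 := ℂ)] with x hx
  simp only [pdF, hx]

lemma pdF_iter_congr {a : Fin n → ℂ} (i : Fin n) (m : ℕ) {f g : (Fin n → ℂ) → ℂ}
    (h : f =ᶠ[nhds a] g) : (pdF i)^[m] f =ᶠ[nhds a] (pdF i)^[m] g := by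
  induction m with
  | zero => exact h
  | succ m ih =>
    rw [Function.iterate_succ_apply', Function.iterate_succ_apply']
    exact pdF_congr i ih

lemma pdF_an {a : Fin n → ℂ} (i : Fin n) {f : (Fin n → ℂ) → ℂ}
    (h : AnalyticAt ℂ f a) : AnalyticAt ℂ (pdF i f) a := by
  unfold pdF
  exact ((ContinuousLinearMap.apply ℂ ℂ (Pi.single i 1 : Fin n → ℂ)).analyticAt
    (fderiv ℂ f a)).comp h.fderiv

lemma pdF_iter_an {a : Fin n → ℂ} (i : Fin n) (m : ℕ) {f : (Fin n → ℂ) → ℂ}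
    (h : AnalyticAt ℂ f a) : AnalyticAt ℂ ((pdF i)^[m] f) a := by
  induction m with
  | zero => exact h
  | succ m ih =>
    rw [Function.iterate_succ_apply']
    exact pdF_an i ih

lemma pdF_comm_at {a : Fin n → ℂ} (i j : Fin n) {f : (Fin n → ℂ) → ℂ}
    (h : AnalyticAt ℂ f a) : pdF i (pdF j f) a = pdF j (pdF i f) a := by
  have hd : DifferentiableAt ℂ (fderiv ℂ f) a := h.fderiv.differentiableAt
  have hs : IsSymmSndFDerivAt ℂ f a := h.contDiffAt.isSymmSndFDerivAt_of_omega
  have key : ∀ i j : Fin n, pdF i (pdF j f) a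
      = fderiv ℂ (fderiv ℂ f) a (Pi.single i 1) (Pi.single j 1) := by
    intro i j
    unfold pdF
    rw [fderiv_clm_apply hd (differentiableAt_const _)]
    simp
  rw [key, key]
  exact hs _ _

lemma pdF_comm {a : Fin n → ℂ} (i j : Fin n) {f : (Fin n → ℂ) → ℂ}
    (h : AnalyticAt ℂ f a) : pdF i (pdF j f) =ᶠ[nhds a] pdF j (pdF i f) := by
  filter_upwards [h.eventually_analyticAt] with x hx using pdF_comm_at i j hx

lemma pdF_iter_comm {a : Fin n → ℂ} (i j : Fin n) (m : ℕ) {f : (Fin n → ℂ) → ℂ}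
    (h : AnalyticAt ℂ f a) :
    pdF i ((pdF j)^[m] f) =ᶠ[nhds a] (pdF j)^[m] (pdF i f) := by
  induction m with
  | zero => exact Filter.EventuallyEq.rfl
  | succ m ih =>
    rw [Function.iterate_succ_apply', Function.iterate_succ_apply']
    exact (pdF_comm i j (pdF_iter_an j m h)).trans (pdF_congr j ih)

def ML (γ : Fin n → ℕ) (l : List (Fin n)) (f : (Fin n → ℂ) → ℂ) : (Fin n → ℂ) → ℂ :=
  (l.map fun i => (pdF i)^[γ i]).foldr (· ∘ ·) id f

lemma ML_cons (γ : Fin n → ℕ) (k : Fin n) (l : List (Fin n)) (f : (Fin n → ℂ) → ℂ) :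
    ML γ (k :: l) f = (pdF k)^[γ k] (ML γ l f) := rfl

lemma mderivF_eq (γ : Fin n → ℕ) (f : (Fin n → ℂ) → ℂ) :
    mderivF γ f = ML γ (List.finRange n) f := by
  unfold mderivF ML
  rw [List.ofFn_eq_map]

lemma ML_an {a : Fin n → ℂ} (γ : Fin n → ℕ) (l : List (Fin n)) {f : (Fin n → ℂ) → ℂ}
    (h : AnalyticAt ℂ f a) : AnalyticAt ℂ (ML γ l f) a := by
  induction l with
  | nil => exact h
  | cons k l ih => rw [ML_cons]; exact pdF_iter_an _ _ ih

lemma ML_congr (γ γ' : Fin n → ℕ) (l : List (Fin n)) (f : (Fin n → ℂ) → ℂ)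
    (h : ∀ i ∈ l, γ i = γ' i) : ML γ l f = ML γ' l f := by
  induction l with
  | nil => rfl
  | cons k l ih =>
    rw [ML_cons, ML_cons, h k (by simp), ih (fun i hi => h i (by simp [hi]))]

lemma ML_zero (γ : Fin n → ℕ) (l : List (Fin n)) (f : (Fin n → ℂ) → ℂ)
    (h : ∀ i ∈ l, γ i = 0) : ML γ l f = f := by
  induction l with
  | nil => rfl
  | cons k l ih =>
    rw [ML_cons, h k (by simp), ih (fun i hi => h i (by simp [hi]))]
    rfl

lemma ML_succ {a : Fin n → ℂ} (γ : Fin n → ℕ) (i : Fin n) (l : List (Fin n))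
    (hl : l.Nodup) (hi : i ∈ l) {f : (Fin n → ℂ) → ℂ} (h : AnalyticAt ℂ f a) :
    pdF i (ML γ l f) =ᶠ[nhds a] ML (γ + Pi.single i 1) l f := by
  induction l with
  | nil => simp at hi
  | cons k l ih =>
    rw [List.nodup_cons] at hl
    rw [ML_cons, ML_cons]
    by_cases hik : i = k
    · subst hik
      rw [ML_congr (γ + Pi.single i 1) γ l f]
      · have e : (γ + Pi.single i 1 : Fin n → ℕ) i = γ i + 1 := by simp
        rw [e, Function.iterate_succ_apply']
      · intro j hj
        have : j ≠ i := fun e => hl.1 (e ▸ hj)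
        simp [this]
    · have hi' : i ∈ l := by simpa [hik] using hi
      have hk : (γ + Pi.single i 1 : Fin n → ℕ) k = γ k := by
        simp [Ne.symm hik]
      rw [hk]
      exact (pdF_iter_comm i k _ (ML_an γ l h)).trans (pdF_iter_congr k _ (ih hl.2 hi'))

lemma mderivF_an {a : Fin n → ℂ} (γ : Fin n → ℕ) {f : (Fin n → ℂ) → ℂ}
    (h : AnalyticAt ℂ f a) : AnalyticAt ℂ (mderivF γ f) a := by
  rw [mderivF_eq]; exact ML_an _ _ h

lemma mderivF_succ {a : Fin n → ℂ} (γ : Fin n → ℕ) (i : Fin n)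
    {f : (Fin n → ℂ) → ℂ} (h : AnalyticAt ℂ f a) :
    pdF i (mderivF γ f) =ᶠ[nhds a] mderivF (γ + Pi.single i 1) f := by
  rw [mderivF_eq, mderivF_eq]
  exact ML_succ γ i _ (List.nodup_finRange n) (List.mem_finRange i) h

lemma mderivF_zero (f : (Fin n → ℂ) → ℂ) : mderivF 0 f = f := by
  rw [mderivF_eq]; exact ML_zero _ _ _ (by simp)

lemma mderivF_first {d : ℕ} (m : ℕ) (f : (Fin (d + 1) → ℂ) → ℂ) :
    mderivF (Function.update 0 0 m) f = (pdF 0)^[m] f := by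
  rw [mderivF_eq, List.finRange_succ, ML_cons, ML_zero]
  · simp
  · intro i hi
    simp only [List.mem_map] at hi
    obtain ⟨j, _, rfl⟩ := hi
    simp

/-! ### the change of variables -/

def xi {d : ℕ} (P : (Fin (d + 1) → ℂ) → ℂ) (x : Fin (d + 1) → ℂ) : Fin (d + 1) → ℂ :=
  Function.update x 0 (P x)

variable {d : ℕ} {P : (Fin (d + 1) → ℂ) → ℂ}

lemma xi_zero (hP0 : P 0 = 0) : xi P 0 = 0 := by
  unfold xi; rw [hP0]; ext i; by_cases h : i = 0
  · subst h; simp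
  · simp [h]

lemma xi_an (hP : AnalyticAt ℂ P 0) : AnalyticAt ℂ (xi P) 0 := by
  rw [analyticAt_pi_iff]
  intro i
  by_cases h : i = 0
  · subst h; simpa [xi] using hP
  · have : (fun x : Fin (d + 1) → ℂ => xi P x i) = fun x => x i := by
      ext x; simp [xi, h]
    rw [this]
    exact (ContinuousLinearMap.proj (R := ℂ) (φ := fun _ : Fin (d + 1) => ℂ) i).analyticAt 0

lemma comp_an (hP : AnalyticAt ℂ P 0) (hP0 : P 0 = 0) {g : (Fin (d + 1) → ℂ) → ℂ}
    (hg : AnalyticAt ℂ g 0) : AnalyticAt ℂ (fun x => g (xi P x)) 0 := by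
  apply AnalyticAt.comp' _ (xi_an hP)
  rwa [xi_zero hP0]

lemma xi_tendsto (hP : AnalyticAt ℂ P 0) (hP0 : P 0 = 0) :
    Filter.Tendsto (xi P) (nhds 0) (nhds 0) := by
  have := (xi_an hP).continuousAt.tendsto
  rwa [xi_zero hP0] at this

lemma chain_at (i : Fin (d + 1)) {g : (Fin (d + 1) → ℂ) → ℂ} {x : Fin (d + 1) → ℂ}
    (hP : DifferentiableAt ℂ P x) (hg : DifferentiableAt ℂ g (xi P x)) :
    pdF i (fun z => g (xi P z)) x = pdF i P x * pdF 0 g (xi P x) +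
      (if i = 0 then 0 else 1) * pdF i g (xi P x) := by
  have hxi : HasFDerivAt (xi P) (ContinuousLinearMap.pi fun k : Fin (d + 1) =>
      if k = 0 then fderiv ℂ P x else ContinuousLinearMap.proj k) x := by
    rw [hasFDerivAt_pi]
    intro k
    by_cases h : k = 0
    · subst h; simpa [xi] using hP.hasFDerivAt
    · have : (fun x : Fin (d + 1) → ℂ => xi P x k) = fun x => x k := by
        ext x; simp [xi, h]
      rw [this]
      simp only [h, if_false]
      exact hasFDerivAt_apply k x
  have hc := (hg.hasFDerivAt.comp x hxi).fderiv
  have hc' : fderiv ℂ (fun z => g (xi P z)) x = _ := hc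
  unfold pdF
  rw [hc']
  simp only [ContinuousLinearMap.comp_apply]
  have hv : (ContinuousLinearMap.pi fun k : Fin (d + 1) =>
      if k = 0 then fderiv ℂ P x else ContinuousLinearMap.proj k) (Pi.single i 1)
      = fderiv ℂ P x (Pi.single i 1) • (Pi.single 0 1 : Fin (d + 1) → ℂ) +
        (if i = 0 then (0 : ℂ) else 1) • (Pi.single i 1 : Fin (d + 1) → ℂ) := by
    ext k
    by_cases h : k = 0
    · subst h
      by_cases hi : i = 0
      · simp [hi]
      · simp [hi, Ne.symm hi]
    · by_cases hi : i = 0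
      · subst hi; simp [h]
      · simp [h, hi]
  rw [hv, map_add, map_smul, map_smul]
  simp

lemma chain (hP : AnalyticAt ℂ P 0) (hP0 : P 0 = 0) (i : Fin (d + 1))
    {g : (Fin (d + 1) → ℂ) → ℂ} (hg : AnalyticAt ℂ g 0) :
    ∀ᶠ x in nhds (0 : Fin (d + 1) → ℂ),
    pdF i (fun z => g (xi P z)) x = pdF i P x * pdF 0 g (xi P x) +
      (if i = 0 then 0 else 1) * pdF i g (xi P x) := by
  filter_upwards [hP.eventually_analyticAt,
    (xi_tendsto hP hP0).eventually hg.eventually_analyticAt] with x h1 h2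
  exact chain_at i h1.differentiableAt h2.differentiableAt

/-- derivative of `b · (∂_δ f)∘ξ`. -/
lemma term_deriv (hP : AnalyticAt ℂ P 0) (hP0 : P 0 = 0) (i : Fin (d + 1))
    (δ : Fin (d + 1) → ℕ) {b f : (Fin (d + 1) → ℂ) → ℂ} (hb : AnalyticAt ℂ b 0)
    (hf : AnalyticAt ℂ f 0) :
    ∀ᶠ x in nhds (0 : Fin (d + 1) → ℂ),
    pdF i (fun z => b z * mderivF δ f (xi P z)) x =
      pdF i b x * mderivF δ f (xi P x)
      + (b x * pdF i P x) * mderivF (δ + Pi.single 0 1) f (xi P x)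
      + ((if i = 0 then 0 else 1) * b x) * mderivF (δ + Pi.single i 1) f (xi P x) := by
  have hm := mderivF_an δ hf
  filter_upwards [hb.eventually_analyticAt, (comp_an hP hP0 hm).eventually_analyticAt,
    chain hP hP0 i hm, (xi_tendsto hP hP0).eventually (mderivF_succ δ 0 hf),
    (xi_tendsto hP hP0).eventually (mderivF_succ δ i hf)] with x h1 h2 h3 h4 h5
  rw [← h4, ← h5]
  have : pdF i (fun z => b z * mderivF δ f (xi P z)) x
      = b x * pdF i (fun z => mderivF δ f (xi P z)) x + mderivF δ f (xi P x) * pdF i b x := by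
    unfold pdF
    rw [fderiv_fun_mul h1.differentiableAt h2.differentiableAt]
    simp
  rw [this, h3]
  ring

def idx (α : Fin (d + 1) → ℕ) (j : ℕ) : Finset (Fin (d + 1) → ℕ) :=
  (Fintype.piFinset fun i => Finset.range (α i + 1)).filter
    (fun γ : Fin (d + 1) → ℕ => γ 0 = 0 ∧ (∑ i, γ i) ≤ (∑ i, α i) - j)

/-- the remainder sum -/
def RS (P : (Fin (d + 1) → ℂ) → ℂ) (α : Fin (d + 1) → ℕ)
    (B : ℕ → (Fin (d + 1) → ℕ) → ((Fin (d + 1) → ℂ) → ℂ))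
    (f : (Fin (d + 1) → ℂ) → ℂ) (x : Fin (d + 1) → ℂ) : ℂ :=
  ∑ j ∈ Finset.Icc 1 ((∑ i, α i) - 1), ∑ γ ∈ idx α j,
    B j γ x * mderivF (Function.update γ 0 j) f (xi P x)

/-- Operators of remainder type. -/
def Rep (P : (Fin (d + 1) → ℂ) → ℂ) (α : Fin (d + 1) → ℕ)
    (Op : ((Fin (d + 1) → ℂ) → ℂ) → (Fin (d + 1) → ℂ) → ℂ) : Prop :=
  ∃ B : ℕ → (Fin (d + 1) → ℕ) → ((Fin (d + 1) → ℂ) → ℂ),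
    (∀ j γ, AnalyticAt ℂ (B j γ) 0) ∧
    ∀ f : (Fin (d + 1) → ℂ) → ℂ, AnalyticAt ℂ f 0 →
      ∀ᶠ x in nhds (0 : Fin (d + 1) → ℂ), Op f x = RS P α B f x

variable {α : Fin (d + 1) → ℕ}
  {Op Op' : ((Fin (d + 1) → ℂ) → ℂ) → (Fin (d + 1) → ℂ) → ℂ}

lemma Rep.congr (h : Rep P α Op)
    (he : ∀ f : (Fin (d + 1) → ℂ) → ℂ, AnalyticAt ℂ f 0 →
      ∀ᶠ x in nhds (0 : Fin (d + 1) → ℂ), Op' f x = Op f x) : Rep P α Op' := by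
  obtain ⟨B, hB, h⟩ := h
  refine ⟨B, hB, fun f hf => ?_⟩
  filter_upwards [h f hf, he f hf] with x h1 h2
  rw [h2, h1]

lemma Rep.zero : Rep P α (fun _ _ => 0) :=
  ⟨fun _ _ _ => 0, fun _ _ => analyticAt_const, fun f _ => by simp [RS]⟩

lemma Rep.add (h : Rep P α Op) (h' : Rep P α Op') :
    Rep P α (fun f x => Op f x + Op' f x) := by
  obtain ⟨B, hB, h⟩ := h
  obtain ⟨B', hB', h'⟩ := h'
  refine ⟨fun j γ x => B j γ x + B' j γ x, fun j γ => (hB j γ).add (hB' j γ), fun f hf => ?_⟩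
  filter_upwards [h f hf, h' f hf] with x h1 h2
  rw [h1, h2]
  simp only [RS, add_mul, Finset.sum_add_distrib]

lemma Rep.sum {ι : Type*} (s : Finset ι)
    (O : ι → ((Fin (d + 1) → ℂ) → ℂ) → (Fin (d + 1) → ℂ) → ℂ)
    (h : ∀ k ∈ s, Rep P α (O k)) : Rep P α (fun f x => ∑ k ∈ s, O k f x) := by
  classical
  induction s using Finset.induction_on with
  | empty => simpa using Rep.zero
  | insert k s hk ih =>
    simp only [Finset.sum_insert hk]
    exact (h k (by simp)).add (ih fun k' hk' => h k' (by simp [hk']))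

lemma Rep.single {b : (Fin (d + 1) → ℂ) → ℂ} (hb : AnalyticAt ℂ b 0) (j : ℕ)
    (γ : Fin (d + 1) → ℕ) (hj : j ∈ Finset.Icc 1 ((∑ i, α i) - 1)) (hγ : γ ∈ idx α j)
    (δ : Fin (d + 1) → ℕ) (hδ : δ = Function.update γ 0 j) :
    Rep P α (fun f x => b x * mderivF δ f (xi P x)) := by
  classical
  refine ⟨fun j' γ' x => if j' = j ∧ γ' = γ then b x else 0, fun j' γ' => ?_, fun f _ => ?_⟩
  · by_cases h : j' = j ∧ γ' = γ
    · simpa [h] using hb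
    · simp only [h, if_false]; exact analyticAt_const
  · refine Filter.Eventually.of_forall fun x => ?_
    unfold RS
    rw [Finset.sum_eq_single_of_mem j hj, Finset.sum_eq_single_of_mem γ hγ]
    · simp [hδ]
    · intro γ' _ hne; simp [hne]
    · intro j' _ hne; simp [hne]

lemma mem_idx {j : ℕ} {γ : Fin (d + 1) → ℕ} :
    γ ∈ idx α j ↔ (∀ i, γ i ≤ α i) ∧ γ 0 = 0 ∧ (∑ i, γ i) ≤ (∑ i, α i) - j := by
  simp [idx, Nat.lt_succ_iff]

lemma sum_succ (γ : Fin (d + 1) → ℕ) (i : Fin (d + 1)) :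
    ∑ k, (γ + Pi.single i 1 : Fin (d + 1) → ℕ) k = ∑ k, γ k + 1 := by
  simp [Finset.sum_add_distrib]

/-- the three derived terms of a single term, at level `α + e_i`. -/
lemma Rep.term {b : (Fin (d + 1) → ℂ) → ℂ} (hb : AnalyticAt ℂ b 0)
    (hP : AnalyticAt ℂ P 0) (hP0 : P 0 = 0) (i : Fin (d + 1)) (j : ℕ)
    (γ : Fin (d + 1) → ℕ) (hj : j ∈ Finset.Icc 1 ((∑ i, α i) - 1)) (hγ : γ ∈ idx α j) :
    Rep P (α + Pi.single i 1)
      (fun f => pdF i (fun z => b z * mderivF (Function.update γ 0 j) f (xi P z))) := by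
  rw [Finset.mem_Icc] at hj
  rw [mem_idx] at hγ
  obtain ⟨hγ1, hγ2, hγ3⟩ := hγ
  have hle : ∀ k, α k ≤ (α + Pi.single i 1 : Fin (d + 1) → ℕ) k := fun k => by simp
  refine Rep.congr (((Rep.single (b := pdF i b) (pdF_an i hb) j γ ?_ ?_ _ rfl).add
    (Rep.single (b := fun x => b x * pdF i P x) (hb.mul (pdF_an i hP)) (j + 1) γ ?_ ?_
      (Function.update γ 0 j + Pi.single 0 1) ?_)).add
    (Op' := fun f x => ((if i = 0 then 0 else 1) * b x) *
      mderivF (Function.update γ 0 j + Pi.single i 1) f (xi P x)) ?_)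
    (fun f hf => term_deriv hP hP0 i _ hb hf)
  · rw [Finset.mem_Icc, sum_succ]; omega
  · rw [mem_idx, sum_succ]
    exact ⟨fun k => (hγ1 k).trans (hle k), hγ2, by omega⟩
  · rw [Finset.mem_Icc, sum_succ]; omega
  · rw [mem_idx, sum_succ]
    exact ⟨fun k => (hγ1 k).trans (hle k), hγ2, by omega⟩
  · ext k
    by_cases h : k = 0
    · subst h; simp
    · simp [h]
  · by_cases hi : i = 0
    · simpa [hi] using Rep.zero
    · refine Rep.single (b := fun x => (if i = 0 then 0 else 1) * b x)
        (analyticAt_const.mul hb) j (γ + Pi.single i 1) ?_ ?_ _ ?_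
      · rw [Finset.mem_Icc, sum_succ]; omega
      · rw [mem_idx, sum_succ, sum_succ]
        refine ⟨fun k => ?_, ?_, by omega⟩
        · simpa using hγ1 k
        · simp [hγ2, Ne.symm hi]
      · ext k
        by_cases h : k = 0
        · subst h; simp [Ne.symm hi]
        · simp [h]

lemma RS_rep (hP : AnalyticAt ℂ P 0) (hP0 : P 0 = 0) (i : Fin (d + 1))
    (B : ℕ → (Fin (d + 1) → ℕ) → ((Fin (d + 1) → ℂ) → ℂ))
    (hB : ∀ j γ, AnalyticAt ℂ (B j γ) 0) :
    Rep P (α + Pi.single i 1) (fun f => pdF i (RS P α B f)) := by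
  have h1 : Rep P (α + Pi.single i 1) (fun f x =>
      ∑ j ∈ Finset.Icc 1 ((∑ i, α i) - 1), ∑ γ ∈ idx α j,
      pdF i (fun z => B j γ z * mderivF (Function.update γ 0 j) f (xi P z)) x) := by
    refine Rep.sum _ _ fun j hj => Rep.sum _ _ fun γ hγ => ?_
    exact Rep.term (hB j γ) hP hP0 i j γ hj hγ
  refine h1.congr fun f hf => ?_
  have hall : ∀ᶠ x in nhds (0 : Fin (d + 1) → ℂ),
      ∀ j ∈ Finset.Icc 1 ((∑ i, α i) - 1), ∀ γ ∈ idx α j,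
      AnalyticAt ℂ (fun z => B j γ z * mderivF (Function.update γ 0 j) f (xi P z)) x := by
    rw [Filter.eventually_all_finset]
    intro j _
    rw [Filter.eventually_all_finset]
    intro γ _
    exact ((hB j γ).mul (comp_an hP hP0 (mderivF_an _ hf))).eventually_analyticAt
  filter_upwards [hall] with x hx
  unfold pdF RS
  rw [fderiv_fun_sum]
  · simp only [ContinuousLinearMap.sum_apply]
    refine Finset.sum_congr rfl fun j hj => ?_
    rw [fderiv_fun_sum fun γ hγ => (hx j hj γ hγ).differentiableAt]
    simp only [ContinuousLinearMap.sum_apply]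
  · intro j hj
    exact DifferentiableAt.fun_sum fun γ hγ => (hx j hj γ hγ).differentiableAt

lemma fun_mul_an {f g : (Fin (d + 1) → ℂ) → ℂ} (hf : AnalyticAt ℂ f 0)
    (hg : AnalyticAt ℂ g 0) : AnalyticAt ℂ (fun x => f x * g x) 0 := hf.mul hg

lemma RS_an (hP : AnalyticAt ℂ P 0) (hP0 : P 0 = 0)
    (B : ℕ → (Fin (d + 1) → ℕ) → ((Fin (d + 1) → ℂ) → ℂ))
    (hB : ∀ j γ, AnalyticAt ℂ (B j γ) 0) {f : (Fin (d + 1) → ℂ) → ℂ}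
    (hf : AnalyticAt ℂ f 0) : AnalyticAt ℂ (RS P α B f) 0 := by
  unfold RS
  refine Finset.analyticAt_fun_sum _ fun j _ => Finset.analyticAt_fun_sum _ fun γ _ => ?_
  exact (hB j γ).mul (comp_an hP hP0 (mderivF_an _ hf))

/-- main coefficient -/
def MC (P : (Fin (d + 1) → ℂ) → ℂ) (α : Fin (d + 1) → ℕ) (x : Fin (d + 1) → ℂ) : ℂ :=
  ∏ i, (pdF i P x) ^ (α i)

lemma MC_an (hP : AnalyticAt ℂ P 0) : AnalyticAt ℂ (MC P α) 0 := by
  unfold MC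
  exact Finset.analyticAt_fun_prod _ fun i _ => (pdF_an i hP).pow _

lemma MC_succ (i : Fin (d + 1)) (x : Fin (d + 1) → ℂ) :
    MC P (α + Pi.single i 1) x = MC P α x * pdF i P x := by
  unfold MC
  simp only [Pi.add_apply, pow_add, Finset.prod_mul_distrib]
  congr 1
  rw [Finset.prod_eq_single i]
  · simp
  · intro k _ hk; simp [hk]
  · simp

/-- the claim -/
def Claim (P : (Fin (d + 1) → ℂ) → ℂ) (α : Fin (d + 1) → ℕ) : Prop :=
  Rep P α (fun f x => mderivF α (fun z => f (xi P z)) x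
    - MC P α x * mderivF (Function.update 0 0 (∑ i, α i)) f (xi P x)
    - (if α 0 = 0 then 1 else 0) * mderivF α f (xi P x))

lemma claim_single (hP : AnalyticAt ℂ P 0) (hP0 : P 0 = 0) (i : Fin (d + 1)) :
    Claim P (Pi.single i 1) := by
  refine Rep.zero.congr fun f hf => ?_
  have hs : ∑ k, (Pi.single i 1 : Fin (d + 1) → ℕ) k = 1 := by simp
  have hm : MC P (Pi.single i 1) = pdF i P := by
    ext x
    have := MC_succ (P := P) (α := 0) i x
    rw [zero_add] at this
    rw [this]; simp [MC]
  have h1 := mderivF_succ 0 i (comp_an hP hP0 hf)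
  have h2 := (xi_tendsto hP hP0).eventually (mderivF_succ 0 i hf)
  rw [zero_add, mderivF_zero] at h1 h2
  rw [hs, hm, mderivF_first]
  filter_upwards [h1, h2, chain hP hP0 i hf] with x h1 h2 h3
  rw [← h1, ← h2, h3]
  by_cases hi : i = 0
  · subst hi; simp
  · simp [hi, Ne.symm hi]

lemma claim_succ (hP : AnalyticAt ℂ P 0) (hP0 : P 0 = 0) (i : Fin (d + 1))
    (hα : 1 ≤ ∑ i, α i) (h : Claim P α) : Claim P (α + Pi.single i 1) := by
  obtain ⟨B, hB, h⟩ := h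
  set N := ∑ i, α i with hN
  have hle : ∀ k, α k ≤ (α + Pi.single i 1 : Fin (d + 1) → ℕ) k := fun k => by simp
  -- extra terms
  have r1 : Rep P (α + Pi.single i 1) (fun f x => pdF i (MC P α) x *
      mderivF (Function.update 0 0 N) f (xi P x)) := by
    refine Rep.single (pdF_an i (MC_an hP)) N 0 ?_ ?_ _ rfl
    · rw [Finset.mem_Icc, sum_succ]; omega
    · rw [mem_idx]; simp
  have r2 : Rep P (α + Pi.single i 1) (fun f x => ((if i = 0 then 0 else 1) * MC P α x) *
      mderivF (Function.update (0 : Fin (d + 1) → ℕ) 0 N + Pi.single i 1) f (xi P x)) := by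
    by_cases hi : i = 0
    · simpa [hi] using Rep.zero
    · refine Rep.single (b := fun x => (if i = 0 then 0 else 1) * MC P α x)
        (analyticAt_const.mul (MC_an hP)) N (Pi.single i 1) ?_ ?_ _ ?_
      · rw [Finset.mem_Icc, sum_succ]; omega
      · rw [mem_idx, sum_succ]
        refine ⟨fun k => by simp, by simp [Ne.symm hi], ?_⟩
        simp [← hN]
      · ext k
        by_cases h : k = 0
        · subst h; simp [Ne.symm hi]
        · simp [h]
  have r3 : Rep P (α + Pi.single i 1) (fun f x => ((if α 0 = 0 then 1 else 0) * pdF i P x) *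
      mderivF (α + Pi.single 0 1) f (xi P x)) := by
    by_cases ha : α 0 = 0
    · refine Rep.single (b := fun x => (if α 0 = 0 then 1 else 0) * pdF i P x)
        (analyticAt_const.mul (pdF_an i hP)) 1 α ?_ ?_ _ ?_
      · rw [Finset.mem_Icc, sum_succ]; omega
      · rw [mem_idx, sum_succ]
        exact ⟨hle, ha, by omega⟩
      · ext k
        by_cases h : k = 0
        · subst h; simp [ha]
        · simp [h]
    · simpa [ha] using Rep.zero
  refine (((RS_rep hP hP0 i B hB).add (r1.add r2)).add r3).congr fun f hf => ?_
  have e0 : mderivF α (fun z => f (xi P z)) =ᶠ[nhds 0] fun x =>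
      (RS P α B f x + MC P α x * mderivF (Function.update 0 0 N) f (xi P x)) +
      (fun _ => if α 0 = 0 then (1 : ℂ) else 0) x * mderivF α f (xi P x) := by
    filter_upwards [h f hf] with x hx
    rw [← hx]; ring
  have e1 := (mderivF_succ α i (comp_an hP hP0 hf)).symm.trans (pdF_congr i e0)
  have aR := RS_an (α := α) hP hP0 B hB hf
  have aM := fun_mul_an (MC_an (α := α) hP) (comp_an hP hP0 (mderivF_an (Function.update 0 0 N) hf))
  have aD := fun_mul_an (analyticAt_const (v := (if α 0 = 0 then (1 : ℂ) else 0)))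
    (comp_an hP hP0 (mderivF_an α hf))
  have ca : AnalyticAt ℂ (fun _ : Fin (d + 1) → ℂ => if α 0 = 0 then (1 : ℂ) else 0) 0 :=
    analyticAt_const
  filter_upwards [e1, aR.eventually_analyticAt, aM.eventually_analyticAt,
    aD.eventually_analyticAt, term_deriv hP hP0 i (Function.update 0 0 N) (MC_an (α := α) hP) hf,
    term_deriv hP hP0 i α ca hf] with x h1 h2 h3 h4 h5 h6
  rw [h1]
  have hsplit : pdF i (fun x =>
      (RS P α B f x + MC P α x * mderivF (Function.update 0 0 N) f (xi P x)) +
      (fun _ => if α 0 = 0 then (1 : ℂ) else 0) x * mderivF α f (xi P x)) x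
      = pdF i (RS P α B f) x
        + pdF i (fun x => MC P α x * mderivF (Function.update 0 0 N) f (xi P x)) x
        + pdF i (fun x => (fun _ => if α 0 = 0 then (1 : ℂ) else 0) x
            * mderivF α f (xi P x)) x := by
    unfold pdF
    rw [fderiv_fun_add (h2.differentiableAt.fun_add h3.differentiableAt) h4.differentiableAt,
      fderiv_fun_add h2.differentiableAt h3.differentiableAt]
    rfl
  rw [hsplit, h5, h6, sum_succ, ← hN, MC_succ]
  have hu : Function.update (0 : Fin (d + 1) → ℕ) 0 N + Pi.single 0 1
      = Function.update (0 : Fin (d + 1) → ℕ) 0 (N + 1) := by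
    ext k
    by_cases h : k = 0
    · subst h; simp
    · simp [h]
  have hc : pdF i (fun _ : Fin (d + 1) → ℂ => if α 0 = 0 then (1 : ℂ) else 0) x = 0 := by
    simp [pdF]
  rw [hu, hc]
  by_cases hi : i = 0
  · subst hi; simp; ring
  · simp [hi, Ne.symm hi]; ring

lemma claim_all (hP : AnalyticAt ℂ P 0) (hP0 : P 0 = 0) (N : ℕ) :
    ∀ α : Fin (d + 1) → ℕ, ∑ i, α i = N + 1 → Claim P α := by
  induction N with
  | zero =>
    intro α h
    obtain ⟨i, hi⟩ : ∃ i, α i ≠ 0 := by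
      by_contra! hc
      simp [hc] at h
    have hd : α = (α - Pi.single i 1) + Pi.single i 1 := by
      ext k
      by_cases hk : k = i
      · subst hk; simp; omega
      · simp [hk]
    rw [hd, sum_succ] at h
    have : α - Pi.single i 1 = 0 := by
      ext k
      have h0 : ∑ k, (α - Pi.single i 1 : Fin (d + 1) → ℕ) k = 0 := by omega
      rw [Finset.sum_eq_zero_iff] at h0
      exact h0 k (Finset.mem_univ _)
    rw [hd, this, zero_add]
    exact claim_single hP hP0 i
  | succ N ih =>
    intro α h
    obtain ⟨i, hi⟩ : ∃ i, α i ≠ 0 := by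
      by_contra! hc
      simp [hc] at h
    have hd : α = (α - Pi.single i 1) + Pi.single i 1 := by
      ext k
      by_cases hk : k = i
      · subst hk; simp; omega
      · simp [hk]
    rw [hd, sum_succ] at h
    rw [hd]
    exact claim_succ hP hP0 i (by omega) (ih _ (by omega))

end CoV

theorem deriv_change_of_variables (d : ℕ) (P : (Fin (d + 1) → ℂ) → ℂ)
    (hP_an : AnalyticAt ℂ P 0) (hP0 : P 0 = 0) (hP1 : pdF 0 P 0 ≠ 0)
    (α : Fin (d + 1) → ℕ) (hα : α ≠ 0) :
    ∃ B : ℕ → (Fin (d + 1) → ℕ) → ((Fin (d + 1) → ℂ) → ℂ),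
      (∀ j γ, AnalyticAt ℂ (B j γ) 0) ∧
      ∀ f : (Fin (d + 1) → ℂ) → ℂ, AnalyticAt ℂ f 0 →
        ∀ᶠ x in nhds (0 : Fin (d + 1) → ℂ),
          mderivF α (fun z => f (Function.update z 0 (P z))) x =
            (∏ i, (pdF i P x) ^ (α i)) *
                (pdF (0 : Fin (d + 1)))^[∑ i, α i] f (Function.update x 0 (P x)) +
              (∑ j ∈ Finset.Icc 1 ((∑ i, α i) - 1),
                ∑ γ ∈ (Fintype.piFinset fun i => Finset.range (α i + 1)).filter
                    (fun γ : Fin (d + 1) → ℕ =>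
                      γ 0 = 0 ∧ (∑ i, γ i) ≤ (∑ i, α i) - j),
                  B j γ x * mderivF (Function.update γ 0 j) f (Function.update x 0 (P x))) +
              (if α 0 = 0 then 1 else 0) * mderivF α f (Function.update x 0 (P x)) := by
  have hs : ∑ i, α i ≠ 0 := by
    intro h
    apply hα
    ext k
    rw [Finset.sum_eq_zero_iff] at h
    exact h k (Finset.mem_univ _)
  obtain ⟨N, hN⟩ := Nat.exists_eq_succ_of_ne_zero hs
  obtain ⟨B, hB, h⟩ := CoV.claim_all hP_an hP0 N α hN
  refine ⟨B, hB, fun f hf => ?_⟩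
  filter_upwards [h f hf] with x hx
  rw [CoV.mderivF_first] at hx
  have hx' := sub_eq_iff_eq_add.mp (sub_eq_iff_eq_add.mp hx)
  refine hx'.trans ?_
  unfold CoV.RS CoV.MC CoV.idx CoV.xi
  ring

end
end

section
/- Define a sequence (a_n)_{n≥0} by a₀ = 0, a₁ = a₂ = 1, and a_n = (n−1)² a_{n−1} + (n−2)(n−3) a_{n−2} for n ≥ 3, and let φ = (1+√5)/2. Then for every n ≥ 1 the normalized sequence α_n := a_n/((n−1)!)² satisfies 1 ≤ α_n ≤ φⁿ; equivalently, ((n−1)!)² ≤ a_n ≤ φⁿ ((n−1)!)² for all n ≥ 1. -/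
/-!
STATEMENT 18.
With a₀ = 0, a₁ = a₂ = 1 and a_n = (n−1)² a_{n−1} + (n−2)(n−3) a_{n−2} for n ≥ 3, and
φ = (1+√5)/2 the golden ratio, for every n ≥ 1 one has ((n−1)!)² ≤ a_n ≤ φⁿ ((n−1)!)²,
i.e. the normalized sequence α_n = a_n/((n−1)!)² satisfies 1 ≤ α_n ≤ φⁿ.
-/

/-- The sequence a₀ = 0, a₁ = a₂ = 1, a_n = (n−1)² a_{n−1} + (n−2)(n−3) a_{n−2} (n ≥ 3). -/
def aseq : ℕ → ℕ
  | 0 => 0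
  | 1 => 1
  | 2 => 1
  | (n + 3) => (n + 2) ^ 2 * aseq (n + 2) + (n + 1) * n * aseq (n + 1)

theorem aseq_bounds_aux (p : ℝ) (hp : 1 ≤ p) (h2 : p ^ 2 = p + 1) (n : ℕ) :
    ((n.factorial : ℝ)) ^ 2 ≤ (aseq (n + 1) : ℝ) ∧
      (aseq (n + 1) : ℝ) ≤ p ^ (n + 1) * ((n.factorial : ℝ)) ^ 2 := by
  induction n using Nat.twoStepInduction with
  | zero => simp [aseq, hp]
  | one =>
    simp only [aseq]
    norm_num
    exact hp.trans (le_abs_self p)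
  | more n ih1 ih2 =>
    obtain ⟨l1, u1⟩ := ih1
    obtain ⟨l2, u2⟩ := ih2
    have hrec : (aseq (n + 2 + 1) : ℝ) =
        ((n : ℝ) + 2) ^ 2 * aseq (n + 1 + 1) + ((n : ℝ) + 1) * n * aseq (n + 1) := by
      have : aseq (n + 2 + 1) =
          (n + 2) ^ 2 * aseq (n + 1 + 1) + (n + 1) * n * aseq (n + 1) := by
        rw [aseq]
      rw [this]
      push_cast
      ring
    have f1 : ((n + 1).factorial : ℝ) = (n + 1) * n.factorial := by
      rw [Nat.factorial_succ]
      push_cast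
      ring
    have f2 : ((n + 2).factorial : ℝ) = (n + 2) * (n + 1).factorial := by
      rw [Nat.factorial_succ (n + 1)]
      push_cast
      ring
    have hn : (0 : ℝ) ≤ n := Nat.cast_nonneg n
    rw [hrec]
    constructor
    · rw [f2, mul_pow]
      have h3 := mul_le_mul_of_nonneg_left l2 (sq_nonneg ((n : ℝ) + 2))
      have h4 : 0 ≤ ((n : ℝ) + 1) * n * aseq (n + 1) := by positivity
      linarith
    · have h3 := mul_le_mul_of_nonneg_left u2 (sq_nonneg ((n : ℝ) + 2))
      have h4 := mul_le_mul_of_nonneg_left u1 (show 0 ≤ ((n : ℝ) + 1) * n by positivity)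
      have hc : ((n : ℝ) + 1) * n ≤ ((n : ℝ) + 2) ^ 2 * ((n : ℝ) + 1) ^ 2 := by
        have a1 : (n : ℝ) ≤ ((n : ℝ) + 2) ^ 2 := by nlinarith
        have a2 : (n : ℝ) + 1 ≤ ((n : ℝ) + 1) ^ 2 := by nlinarith
        calc ((n : ℝ) + 1) * n ≤ ((n : ℝ) + 1) ^ 2 * ((n : ℝ) + 2) ^ 2 := by gcongr
          _ = _ := by ring
      have hq : 0 ≤ p ^ (n + 1) * (n.factorial : ℝ) ^ 2 := by positivity
      have h5 := mul_le_mul_of_nonneg_right hc hq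
      have h6 : p ^ (n + 2 + 1) = p ^ (n + 1 + 1) + p ^ (n + 1) := by
        have : p ^ (n + 2 + 1) = p ^ (n + 1) * p ^ 2 := by ring
        rw [this, h2]
        ring
      have h7 : p ^ (n + 2 + 1) * ((n + 2).factorial : ℝ) ^ 2 =
          ((n : ℝ) + 2) ^ 2 * (p ^ (n + 1 + 1) * ((n + 1).factorial : ℝ) ^ 2) +
          ((n : ℝ) + 2) ^ 2 * ((n : ℝ) + 1) ^ 2 * (p ^ (n + 1) * (n.factorial : ℝ) ^ 2) := by
        rw [h6, f2, f1]
        ring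
      rw [h7]
      linarith

theorem aseq_factorial_bounds :
    ∀ n : ℕ, 1 ≤ n →
      (((n - 1).factorial : ℝ)) ^ 2 ≤ (aseq n : ℝ) ∧
        (aseq n : ℝ) ≤ ((1 + Real.sqrt 5) / 2) ^ n * (((n - 1).factorial : ℝ)) ^ 2 := by
  intro n hn
  obtain ⟨m, rfl⟩ : ∃ m, n = m + 1 := ⟨n - 1, by omega⟩
  have h5 : Real.sqrt 5 ^ 2 = 5 := Real.sq_sqrt (by norm_num)
  have h1 : 1 ≤ Real.sqrt 5 := Real.one_le_sqrt.mpr (by norm_num)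
  simpa using aseq_bounds_aux ((1 + Real.sqrt 5) / 2) (by linarith) (by nlinarith) m
end
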